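/- Let χ : K^× → ℤ/2ℤ be a group homomorphism whose kernel equals the norm group N_{L|K}(L^×), and let n ≥ 1 be such that χ vanishes on U_{n+1} but does not vanish identically on U_n. If e₁/e₂ ∈ U_{2n+1} (i.e. e₁ ≡ e₂ mod 𝔭^{2n+1}) and χ(e₁) = 1, then the subgroup of (ℤ/2ℤ)² generated by the set Im equals all of (ℤ/2ℤ)². -/

import Mathlib

/-- An additively written, normalized (i.e. surjective onto `ℤ`) discrete
valuation on a field `K`.  All axioms are imposed at nonzero arguments only,
so the value of `v` at `0` is irrelevant.  For a finite extension `K` of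
`ℚ_[p]`, the normalized valuation `v : K^× → ℤ` of the paper is such a
structure. -/
structure DValuation (K : Type*) [Field K] where
  /-- the valuation map -/
  v : K → ℤ
  v_mul : ∀ ⦃x y : K⦄, x ≠ 0 → y ≠ 0 → v (x * y) = v x + v y
  min_le_v_add : ∀ ⦃x y : K⦄, x ≠ 0 → y ≠ 0 → x + y ≠ 0 → min (v x) (v y) ≤ v (x + y)
  v_surj : ∀ m : ℤ, ∃ x : K, x ≠ 0 ∧ v x = m

namespace DValuation

variable {K : Type*} [Field K] (w : DValuation K)

/-- `u ∈ U_m` : `u` is (a unit) congruent to `1` modulo `𝔭^m`; for `m ≥ 1`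
this forces `v u = 0`, i.e. `u ∈ 𝔬^×`. -/
def IsUnit₁ (m : ℤ) (u : K) : Prop :=
  u = 1 ∨ m ≤ w.v (u - 1)

end DValuation

namespace DValuation

variable {K : Type*} [Field K] (w : DValuation K)

lemma v_one : w.v 1 = 0 := by
  have := w.v_mul (one_ne_zero (α := K)) one_ne_zero
  rw [one_mul] at this
  omega

lemma v_neg_one : w.v (-1) = 0 := by
  have h0 : (-1 : K) ≠ 0 := neg_ne_zero.2 one_ne_zero
  have := w.v_mul h0 h0
  rw [neg_one_mul, neg_neg, v_one] at this
  omega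

lemma v_inv {x : K} (hx : x ≠ 0) : w.v x⁻¹ = - w.v x := by
  have := w.v_mul hx (inv_ne_zero hx)
  rw [mul_inv_cancel₀ hx, v_one] at this
  omega

/-- `x ∈ 𝔭^m`. -/
def P (m : ℤ) (x : K) : Prop := x = 0 ∨ m ≤ w.v x

variable {w}

lemma isUnit₁_iff {m : ℤ} {u : K} : w.IsUnit₁ m u ↔ w.P m (u - 1) := by
  unfold IsUnit₁ P
  rw [sub_eq_zero]

lemma P.mono {m k : ℤ} {x : K} (h : w.P m x) (hk : k ≤ m) : w.P k x :=
  h.imp id (fun h => hk.trans h)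

lemma P.mul {m k : ℤ} {x y : K} (hx : w.P m x) (hy : w.P k y) : w.P (m + k) (x * y) := by
  by_cases hx0 : x = 0
  · left; simp [hx0]
  by_cases hy0 : y = 0
  · left; simp [hy0]
  have hx := hx.resolve_left hx0
  have hy := hy.resolve_left hy0
  right
  rw [w.v_mul hx0 hy0]
  omega

lemma P.add {m : ℤ} {x y : K} (hx : w.P m x) (hy : w.P m y) : w.P m (x + y) := by
  by_cases hx0 : x = 0
  · simpa [hx0] using hy
  by_cases hy0 : y = 0
  · simpa [hy0] using hx
  by_cases h0 : x + y = 0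
  · exact Or.inl h0
  have hx := hx.resolve_left hx0
  have hy := hy.resolve_left hy0
  right
  have := w.min_le_v_add hx0 hy0 h0
  omega

lemma P_of {x : K} : w.P (w.v x) x := Or.inr le_rfl

lemma P_of_eq {m : ℤ} {x : K} (h : w.v x = m) : w.P m x := Or.inr h.ge

lemma P.neg {m : ℤ} {x : K} (hx : w.P m x) : w.P m (-x) := by
  have := (P_of_eq w.v_neg_one).mul hx
  simpa using this

lemma not_P_one : ¬ w.P 1 (1 : K) := by
  rintro (h | h)
  · exact one_ne_zero h
  · rw [v_one] at h
    omega

lemma unit_v {u : K} (h : w.P 1 (u - 1)) : u ≠ 0 ∧ w.v u = 0 := by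
  have hP : ¬ w.P 1 u := by
    intro hu
    have := hu.add h.neg
    apply not_P_one (w := w)
    simpa using this
  have h0 : u ≠ 0 := fun h => hP (Or.inl h)
  refine ⟨h0, ?_⟩
  have h1 : ¬ 1 ≤ w.v u := fun h => hP (Or.inr h)
  have h2 : w.P 0 u := by
    have := (h.mono (by norm_num : (0:ℤ) ≤ 1)).add (P_of_eq w.v_one)
    simpa using this
  have := h2.resolve_left h0
  omega

/-- The valuation subring of `w`. -/
def ring (w : DValuation K) : ValuationSubring K where
  carrier := {x | w.P 0 x}
  mul_mem' ha hb := by simpa using P.mul ha hb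
  one_mem' := P_of_eq w.v_one
  add_mem' ha hb := P.add ha hb
  zero_mem' := Or.inl rfl
  neg_mem' ha := P.neg ha
  mem_or_inv_mem' x := by
    by_cases hx : x = 0
    · left; left; exact hx
    · by_cases h : 0 ≤ w.v x
      · left; right; exact h
      · right; right; rw [v_inv w hx]; omega

lemma mem_ring {x : K} : x ∈ w.ring ↔ w.P 0 x := Iff.rfl

lemma not_trivial_of_finite {F : Type*} [Field F] [Algebra F K] [FiniteDimensional F K]
    (h : ∀ x : F, x ≠ 0 → w.v (algebraMap F K x) = 0) : False := by
  obtain ⟨x, hx0, hx⟩ := w.v_surj (-1)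
  have hm : ∀ a : F, algebraMap F K a ∈ w.ring := by
    intro a
    rw [mem_ring]
    by_cases ha : a = 0
    · left; simp [ha]
    · exact P_of_eq (h a ha)
  let f : F →+* w.ring := (algebraMap F K).codRestrict w.ring hm
  have hf : (algebraMap w.ring K).comp f = algebraMap F K := by
    ext a; rfl
  have hint : IsIntegral w.ring x := by
    obtain ⟨p, hp, hpx⟩ := IsIntegral.of_finite F x
    refine ⟨p.map f, hp.map f, ?_⟩
    rw [Polynomial.eval₂_map, hf, hpx]
  obtain ⟨y, hy⟩ := IsIntegrallyClosed.isIntegral_iff.1 hint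
  have : w.P 0 x := by
    rw [← hy]; exact y.2
  have := this.resolve_left hx0
  omega

lemma P_two [Algebra ℚ_[2] K] [FiniteDimensional ℚ_[2] K]
    (hext : ∀ x : ℚ_[2], x ≠ 0 →
      w.v (algebraMap ℚ_[2] K x) = w.v (algebraMap ℚ_[2] K 2) * x.valuation) :
    w.P 1 (2 : K) := by
  by_contra hc
  have h0 : (2 : K) ≠ 0 := fun h => hc (Or.inl h)
  have h1 : ¬ 1 ≤ w.v (2 : K) := fun h => hc (Or.inr h)
  have h2 : w.P 0 (2 : K) := by
    have := (P_of_eq w.v_one).add (P_of_eq w.v_one)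
    rwa [one_add_one_eq_two] at this
  have h2 := h2.resolve_left h0
  have h3 : w.v (2 : K) = 0 := by omega
  apply not_trivial_of_finite (w := w) (F := ℚ_[2])
  intro x hx
  rw [hext x hx, map_ofNat, h3, zero_mul]

end DValuation

lemma zmod2_top (H : AddSubgroup (ZMod 2 × ZMod 2)) (a : ZMod 2)
    (h1 : ((1 : ZMod 2), a) ∈ H) (h2 : ((0 : ZMod 2), (1 : ZMod 2)) ∈ H) : H = ⊤ := by
  rw [eq_top_iff]
  rintro p -
  have h3 := H.add_mem h1 h2
  have h4 := H.zero_mem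
  have key : ∀ (a : ZMod 2) (p : ZMod 2 × ZMod 2),
    p = (1, a) ∨ p = (0, 1) ∨ p = (1, a) + (0, 1) ∨ p = 0 := by decide
  rcases key a p with h | h | h | h <;> rw [h] <;> assumption

/-- Case (ii) of Proposition 4:  `K` a finite extension of `ℚ₂` with normalized
valuation `v`, `L = K(√d)` a ramified quadratic extension, `χ : K^× → ℤ/2ℤ`
the homomorphism with kernel `N_{L|K}(L^×)`, factoring through `U₁/U_{n+1}`
but not through `U₁/U_n` (`n ≥ 1`), and `e₁, e₂` distinct `1`-units.
If `e₁/e₂ ∈ U_{2n+1}` and `χ(e₁) = 1`, the subgroup of `(ℤ/2ℤ)²` generated by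
the image set `Im` is all of `(ℤ/2ℤ)²`. -/
theorem chatelet_descent_image_case_ii
    (K : Type*) [Field K] [Algebra ℚ_[2] K] [FiniteDimensional ℚ_[2] K]
    (w : DValuation K)
    (hext : ∀ x : ℚ_[2], x ≠ 0 →
      w.v (algebraMap ℚ_[2] K x) = w.v (algebraMap ℚ_[2] K 2) * x.valuation)
    (L : Type*) [Field L] [Algebra K L] (hL2 : Module.finrank K L = 2)
    (d : K) (hd0 : d ≠ 0) (hd : ¬ IsSquare d)
    (hdL : ∃ δ : L, δ ^ 2 = algebraMap K L d)
    (wL : DValuation L)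
    (hram : ∀ x : K, x ≠ 0 → wL.v (algebraMap K L x) = 2 * w.v x)
    (χ : K → ZMod 2)
    (hχ : ∀ ⦃x y : K⦄, x ≠ 0 → y ≠ 0 → χ (x * y) = χ x + χ y)
    (hker : ∀ x : K, x ≠ 0 → (χ x = 0 ↔ ∃ y : L, y ≠ 0 ∧ Algebra.norm K y = x))
    (n : ℕ) (hn : 1 ≤ n)
    (hvan : ∀ u : K, w.IsUnit₁ ((n : ℤ) + 1) u → χ u = 0)
    (hnonvan : ∃ u : K, w.IsUnit₁ (n : ℤ) u ∧ χ u ≠ 0)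
    (e₁ e₂ : K) (he₁ : w.IsUnit₁ 1 e₁) (he₂ : w.IsUnit₁ 1 e₂) (hee : e₁ ≠ e₂)
    (hcong : w.IsUnit₁ (2 * (n : ℤ) + 1) (e₁ / e₂))
    (hχe₁ : χ e₁ = 1) :
    AddSubgroup.closure
        (({((0 : ZMod 2), (0 : ZMod 2)), (χ (e₁ * e₂), χ (-e₁)),
            (χ e₁, χ (e₁ * (e₁ - e₂))), (χ e₂, χ (e₂ - e₁))} : Set (ZMod 2 × ZMod 2)) ∪
          {p : ZMod 2 × ZMod 2 | ∃ x : K, x ≠ 0 ∧ x ≠ e₁ ∧ x ≠ e₂ ∧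
            χ (x * (x - e₁) * (x - e₂)) = 0 ∧ p = (χ x, χ (x - e₁))}) =
      (⊤ : AddSubgroup (ZMod 2 × ZMod 2)) := by
  have z2 : ∀ a : ZMod 2, a = 0 ∨ a = 1 := by decide
  rw [DValuation.isUnit₁_iff] at he₁ he₂ hcong
  simp only [DValuation.isUnit₁_iff] at hvan hnonvan
  have h2 := DValuation.P_two hext
  obtain ⟨e10, e1v⟩ := DValuation.unit_v he₁
  obtain ⟨e20, e2v⟩ := DValuation.unit_v he₂
  have hcongr : ∀ x y : K, x ≠ 0 → y ≠ 0 → w.P ((n : ℤ) + 1) (x / y - 1) → χ x = χ y := by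
    intro x y hx hy h
    have h1 := hvan _ h
    have h2 := hχ (div_ne_zero hx hy) hy
    rw [div_mul_cancel₀ _ hy, h1, zero_add] at h2
    exact h2
  have hχe₂ : χ e₂ = 1 := by
    rw [← hcongr e₁ e₂ e10 e20 (hcong.mono (by omega)), hχe₁]
  have hneg : ∀ x : K, x ≠ 0 → χ (-x) = χ (-1) + χ x := by
    intro x hx
    rw [← hχ (neg_ne_zero.2 one_ne_zero) hx, neg_one_mul]
  have hdiff : w.P (2 * (n : ℤ) + 1) (e₁ - e₂) := by
    have := hcong.mul (DValuation.P_of_eq e2v)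
    rw [sub_mul, div_mul_cancel₀ _ e20, one_mul, add_zero] at this
    exact this
  refine zmod2_top _ (χ (e₂ - e₁)) ?_ ?_
  · apply AddSubgroup.subset_closure
    left
    rw [← hχe₂]
    simp
  rcases z2 (χ (-1)) with hm | hm
  · apply AddSubgroup.subset_closure
    left
    right; left
    rw [hχ e10 e20, hneg _ e10, hm, hχe₁, hχe₂]
    decide
  -- the main case
  obtain ⟨s, hs0, hsv, hs1, hs⟩ : ∃ s : K, s ≠ 0 ∧ w.v s = n ∧ χ (1 + s) = 1 ∧ χ s = 0 := by
    obtain ⟨u, hu, hχu⟩ := hnonvan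
    have hχu1 : χ u = 1 := (z2 _).resolve_left hχu
    obtain ⟨s, rfl⟩ : ∃ s, u = 1 + s := ⟨u - 1, by ring⟩
    rw [add_sub_cancel_left] at hu
    have hnP : ¬ w.P ((n : ℤ) + 1) s := fun h => hχu (hvan _ (by rwa [add_sub_cancel_left]))
    have hs0 : s ≠ 0 := fun h => hnP (Or.inl h)
    have hv1 : ¬ ((n : ℤ) + 1 ≤ w.v s) := fun h => hnP (Or.inr h)
    have hv2 := hu.resolve_left hs0
    have hv : w.v s = n := by omega
    rcases z2 (χ s) with h | h
    · exact ⟨s, hs0, hv, hχu1, h⟩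
    · obtain ⟨a0, av⟩ := DValuation.unit_v (w := w) (u := 1 + s)
        (by rw [add_sub_cancel_left]; exact hu.mono (by omega))
      obtain ⟨b0, bv⟩ := DValuation.unit_v (w := w) (u := 1 + -s)
        (by rw [add_sub_cancel_left]; exact (hu.mono (by omega)).neg)
      refine ⟨-s, neg_ne_zero.2 hs0, ?_, ?_, ?_⟩
      · rw [← neg_one_mul, w.v_mul (neg_ne_zero.2 one_ne_zero) hs0, w.v_neg_one, hv, zero_add]
      · rw [← hχu1]
        apply hcongr _ _ b0 a0
        have e : (1 + -s) / (1 + s) - 1 = -(2 * s * (1 + s)⁻¹) := by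
          field_simp
          ring
        rw [e]
        have hi : w.P 0 (1 + s)⁻¹ := DValuation.P_of_eq (by rw [w.v_inv a0, av, neg_zero])
        exact (((h2.mul hu).mul hi).mono (by omega)).neg
      · rw [hneg _ hs0, hm, h]
        decide
  obtain ⟨t0, -⟩ := DValuation.unit_v (w := w) (u := 1 + s)
        (by rw [add_sub_cancel_left]; exact Or.inr (by omega))
  have hes0 : e₁ * s ≠ 0 := mul_ne_zero e10 hs0
  have hesv : w.v (e₁ * s) = n := by rw [w.v_mul e10 hs0, e1v, hsv, zero_add]
  have hx1 : e₁ * (1 + s) - e₁ = e₁ * s := by ring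
  have hx0 : e₁ * (1 + s) ≠ 0 := mul_ne_zero e10 t0
  have hx2 : e₁ * (1 + s) - e₂ ≠ 0 := by
    intro h
    have h' : e₁ * s = -(e₁ - e₂) := by linear_combination h
    have := (h' ▸ hdiff.neg : w.P (2 * (n : ℤ) + 1) (e₁ * s)).resolve_left hes0
    omega
  have c1 : χ (e₁ * s) = 1 := by rw [hχ e10 hs0, hχe₁, hs, add_zero]
  have c0 : χ (e₁ * (1 + s)) = 0 := by
    rw [hχ e10 t0, hχe₁, hs1]
    decide
  have c2 : χ (e₁ * (1 + s) - e₂) = 1 := by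
    rw [← c1]
    apply hcongr _ _ hx2 hes0
    have e : (e₁ * (1 + s) - e₂) / (e₁ * s) - 1 = (e₁ - e₂) * (e₁ * s)⁻¹ := by
      field_simp
      ring
    rw [e]
    have hi : w.P (-(n : ℤ)) (e₁ * s)⁻¹ := DValuation.P_of_eq (by rw [w.v_inv hes0, hesv])
    exact (hdiff.mul hi).mono (by omega)
  apply AddSubgroup.subset_closure
  right
  refine ⟨e₁ * (1 + s), hx0, ?_, ?_, ?_, ?_⟩
  · intro h
    rw [h, sub_self] at hx1
    exact hes0 hx1.symm
  · exact fun h => hx2 (sub_eq_zero.2 h)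
  · rw [hx1, hχ (mul_ne_zero hx0 hes0) hx2, hχ hx0 hes0, c0, c1, c2]
    decide
  · rw [hx1, c0, c1]
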